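/- Let 𝒳 ⊆ L⁰₊ and for each n ∈ ℕ define Oₙ^𝒳 := sc{(X − n)₊ : X ∈ 𝒳}. Suppose ⋂ₙ Oₙ^𝒳 = {0}, i.e. the only Y ∈ L⁰₊ belonging to every Oₙ^𝒳 is Y = 0 a.e. Then there exists a measurable function g with 0 < g ≤ 1 P-a.s. such that sup_{Y ∈ Oₙ^𝒳} E_P[Y·g] ≤ 1 holds for every n ∈ ℕ. -/

import Mathlib

open MeasureTheory Filter Topology

/-- `L⁰₊`: (representatives of) measurable functions that are nonnegative `P`-a.s. -/
def L0pos {Ω : Type*} [MeasurableSpace Ω] (P : Measure Ω) : Set (Ω → ℝ) :=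
  {X | Measurable X ∧ ∀ᵐ ω ∂P, 0 ≤ X ω}

/-- `sc S`: the solid hull of the convex hull of `S`. -/
def scSet {Ω : Type*} [MeasurableSpace Ω] (P : Measure Ω) (S : Set (Ω → ℝ)) :
    Set (Ω → ℝ) :=
  {Y | Y ∈ L0pos P ∧ ∃ Z ∈ convexHull ℝ S, ∀ᵐ ω ∂P, Y ω ≤ Z ω}

/-- `Oₙ^𝒳 = sc {(X - n)₊ : X ∈ 𝒳}`. -/
def Oset {Ω : Type*} [MeasurableSpace Ω] (P : Measure Ω) (𝒳 : Set (Ω → ℝ)) (n : ℕ) :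
    Set (Ω → ℝ) :=
  scSet P {f | ∃ X ∈ 𝒳, f = fun ω => max (X ω - n) 0}

/-!
The hypothesis says that `conv 𝒳` is not unbounded in measure on any set of positive measure: if it
were, a Borel–Cantelli argument would give a non-null set on which, for every `n`, some element
of `conv 𝒳` is at least `n + 1`, and the indicator of that set would lie in every `Oₙ`.
For such a convex set we argue as in Yan's theorem. Given a non-null set `A`, some multiple of the
indicator of `A` is outside the `L²`-closure of the solid hull of `conv 𝒳`, and the positive part of
a separating functional is, after truncation, a weight that integrates `conv 𝒳` boundedly and does
not vanish on `A`. Supports of such weights are stable under countable unions, so by exhaustion one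
of them is conull.
-/

open scoped ENNReal InnerProductSpace

section ConvexHull

variable {E F : Type*} [AddCommGroup E] [Module ℝ E] [AddCommGroup F] [PartialOrder F]
  [IsOrderedAddMonoid F] [Module ℝ F] [PosSMulMono ℝ F]

theorem exists_mem_convexHull_image_ge {s t : Set E} {f : E → F} (hf : ConvexOn ℝ s f)
    (hts : t ⊆ s) {x : E} (hx : x ∈ convexHull ℝ t) : ∃ y ∈ convexHull ℝ (f '' t), f x ≤ y := by
  have hconv : Convex ℝ {x ∈ s | ∃ y ∈ convexHull ℝ (f '' t), f x ≤ y} := by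
    rintro x₁ ⟨hx₁, y₁, hy₁, hle₁⟩ x₂ ⟨hx₂, y₂, hy₂, hle₂⟩ a b ha hb hab
    refine ⟨hf.1 hx₁ hx₂ ha hb hab, a • y₁ + b • y₂,
      convex_convexHull ℝ _ hy₁ hy₂ ha hb hab, (hf.2 hx₁ hx₂ ha hb hab).trans ?_⟩
    gcongr
  have hsub : t ⊆ {x ∈ s | ∃ y ∈ convexHull ℝ (f '' t), f x ≤ y} := fun x hx ↦
    ⟨hts hx, f x, subset_convexHull ℝ _ (Set.mem_image_of_mem f hx), le_rfl⟩
  exact (convexHull_min hsub hconv hx).2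

end ConvexHull

section Excess

variable {Ω : Type*}

/-- The excess `(X - c)₊` of a function `X` over the level `c`. -/
def excess (c : ℝ) (X : Ω → ℝ) : Ω → ℝ := fun ω ↦ max (X ω - c) 0

theorem convexOn_excess (c : ℝ) : ConvexOn ℝ Set.univ (excess c : (Ω → ℝ) → Ω → ℝ) := by
  have hmax : ConvexOn ℝ Set.univ fun x : ℝ ↦ max (x - c) 0 :=
    ((convexOn_id convex_univ).sub (concaveOn_const c convex_univ)).sup
      (convexOn_const 0 convex_univ)
  exact ⟨convex_univ, fun X _ Y _ _ _ ha hb hab ω ↦ hmax.2 trivial trivial ha hb hab⟩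

end Excess

section Separation

variable {H : Type*} [NormedAddCommGroup H] [InnerProductSpace ℝ H] [CompleteSpace H]

theorem exists_inner_le_one_lt_inner_of_notMem_closure {D : Set H} (hD : Convex ℝ D)
    (h0 : 0 ∈ D) {x : H} (hx : x ∉ closure D) :
    ∃ v : H, (∀ y ∈ D, ⟪v, y⟫_ℝ ≤ 1) ∧ 1 < ⟪v, x⟫_ℝ := by
  obtain ⟨φ, u, hφD, hφx⟩ := geometric_hahn_banach_closed_point hD.closure isClosed_closure hx
  have hu : 0 < u := by simpa using hφD 0 (subset_closure h0)
  refine ⟨u⁻¹ • (InnerProductSpace.toDual ℝ H).symm φ, fun y hy ↦ ?_, ?_⟩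
  · rw [real_inner_smul_left, InnerProductSpace.toDual_symm_apply, inv_mul_le_one₀ hu]
    exact (hφD y (subset_closure hy)).le
  · rw [real_inner_smul_left, InnerProductSpace.toDual_symm_apply, one_lt_inv_mul₀ hu]
    exact hφx

end Separation

section Exhaustion

variable {Ω : Type*} [MeasurableSpace Ω] {μ : Measure Ω}

theorem exists_mem_measure_compl_eq_zero_of_sUnion_mem [SFinite μ] {𝒜 : Set (Set Ω)}
    (hmeas : ∀ s ∈ 𝒜, MeasurableSet s) (hUnion : ∀ 𝒮 ⊆ 𝒜, 𝒮.Countable → ⋃₀ 𝒮 ∈ 𝒜)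
    (hmeet : ∀ A, MeasurableSet A → μ A ≠ 0 → ∃ s ∈ 𝒜, μ (A ∩ s) ≠ 0) :
    ∃ s ∈ 𝒜, μ sᶜ = 0 := by
  let ν := μ.toFinite
  have hne : 𝒜.Nonempty := ⟨_, hUnion ∅ (Set.empty_subset 𝒜) Set.countable_empty⟩
  obtain ⟨v, -, hv_lim, hv_mem⟩ :=
    exists_seq_tendsto_sSup (hne.image ν) (OrderTop.bddAbove (ν '' 𝒜))
  choose t ht htv using hv_mem
  set s := ⋃₀ Set.range t
  have hs : s ∈ 𝒜 := hUnion _ (Set.range_subset_iff.2 ht) (Set.countable_range t)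
  have hs_max : ∀ r ∈ 𝒜, ν r ≤ ν s := fun r hr ↦
    (le_sSup (Set.mem_image_of_mem ν hr)).trans <| le_of_tendsto' hv_lim fun n ↦
      (htv n).symm.trans_le (measure_mono (Set.subset_sUnion_of_mem (Set.mem_range_self n)))
  refine ⟨s, hs, by_contra fun hsc ↦ ?_⟩
  obtain ⟨r, hr, hsr⟩ := hmeet sᶜ (hmeas s hs).compl hsc
  have hsr_mem : s ∪ r ∈ 𝒜 := by
    simpa only [Set.sUnion_pair] using
      hUnion {s, r} (Set.pair_subset hs hr) (Set.toFinite {s, r}).countable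
  have hle : ν s + ν (sᶜ ∩ r) ≤ ν s + 0 := by
    rw [← measure_union' (disjoint_compl_right.mono_right Set.inter_subset_left) (hmeas s hs),
      Set.union_inter_distrib_left, Set.union_compl_self, Set.univ_inter, add_zero]
    exact hs_max _ hsr_mem
  have hνsr : ν (sᶜ ∩ r) ≤ 0 := (ENNReal.add_le_add_iff_left (measure_ne_top ν s)).1 hle
  exact hsr (absolutelyContinuous_toFinite μ (nonpos_iff_eq_zero.1 hνsr))

end Exhaustion

section UnboundedInMeasure

variable {Ω : Type*} [MeasurableSpace Ω] {μ : Measure Ω} {C : Set (Ω → ℝ)} {A : Set Ω}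

/-- A family `C` of real functions is unbounded in measure on `A` if, up to subsets of `A` of
arbitrarily small measure, some member of `C` exceeds any prescribed level on `A`. On a
non-null `A` this is stronger than failing to be bounded in probability. -/
def UnboundedInMeasureOn (μ : Measure Ω) (C : Set (Ω → ℝ)) (A : Set Ω) : Prop :=
  ∀ K : ℝ, ∀ ε : ℝ≥0∞, 0 < ε → ∃ Z ∈ C, μ (A ∩ {ω | Z ω < K}) ≤ ε

theorem UnboundedInMeasureOn.exists_subset_forall_le (h : UnboundedInMeasureOn μ C A)
    (hC : ∀ Z ∈ C, Measurable Z) (hA : MeasurableSet A) (hμA : μ A ≠ 0) (K : ℕ → ℝ) :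
    ∃ B ⊆ A, MeasurableSet B ∧ μ B ≠ 0 ∧ ∀ n, ∃ Z ∈ C, ∀ ω ∈ B, K n ≤ Z ω := by
  obtain ⟨ε, hε, hε_sum⟩ := ENNReal.exists_pos_sum_of_countable' hμA ℕ
  choose Z hZ hZε using fun n ↦ h (K n) (ε n) (hε n)
  set N := ⋃ n, A ∩ {ω | Z n ω < K n}
  have hN_lt : μ N < μ A :=
    ((measure_iUnion_le _).trans (ENNReal.tsum_le_tsum hZε)).trans_lt hε_sum
  have hN_meas : MeasurableSet N := .iUnion fun n ↦
    hA.inter (measurableSet_lt (hC _ (hZ n)) measurable_const)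
  refine ⟨A \ N, Set.sdiff_subset, hA.diff hN_meas, fun h0 ↦ ?_, fun n ↦ ⟨Z n, hZ n, ?_⟩⟩
  · exact hN_lt.not_ge (tsub_eq_zero_iff_le.1 (nonpos_iff_eq_zero.1 (le_measure_sdiff.trans h0.le)))
  · rintro ω ⟨hωA, hωN⟩
    exact not_lt.1 fun hlt ↦ hωN (Set.mem_iUnion.2 ⟨n, hωA, hlt⟩)

end UnboundedInMeasure

section SolidL2

variable {Ω : Type*} [MeasurableSpace Ω] {μ : Measure Ω} {C : Set (Ω → ℝ)} {A : Set Ω}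

/-- The elements of `L²(μ)` that lie between `0` and some member of `C`. Members of `C` need not be
square integrable themselves. -/
def solidL2 (μ : Measure Ω) (C : Set (Ω → ℝ)) : Set (Lp ℝ 2 μ) :=
  {f | 0 ≤ᵐ[μ] f ∧ ∃ Z ∈ C, f ≤ᵐ[μ] Z}

theorem convex_solidL2 (hC : Convex ℝ C) : Convex ℝ (solidL2 μ C) := by
  rintro f₁ ⟨hf₁, Z₁, hZ₁, hfZ₁⟩ f₂ ⟨hf₂, Z₂, hZ₂, hfZ₂⟩ a b ha hb hab
  have hcoe : ⇑(a • f₁ + b • f₂) =ᵐ[μ] a • ⇑f₁ + b • ⇑f₂ :=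
    (Lp.coeFn_add _ _).trans ((Lp.coeFn_smul a f₁).add (Lp.coeFn_smul b f₂))
  refine ⟨?_, a • Z₁ + b • Z₂, hC hZ₁ hZ₂ ha hb hab, ?_⟩
  · filter_upwards [hcoe, hf₁, hf₂] with ω hω h₁ h₂
    simp only [Pi.zero_apply] at h₁ h₂
    simp only [hω, Pi.zero_apply, Pi.add_apply, Pi.smul_apply, smul_eq_mul]
    positivity
  · filter_upwards [hcoe, hfZ₁, hfZ₂] with ω hω h₁ h₂
    simp only [hω, Pi.add_apply, Pi.smul_apply, smul_eq_mul]
    gcongr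

theorem zero_mem_solidL2 (hC : C ⊆ L0pos μ) (hne : C.Nonempty) : 0 ∈ solidL2 μ C := by
  obtain ⟨Z, hZ⟩ := hne
  have hzero : ⇑(0 : Lp ℝ 2 μ) =ᵐ[μ] 0 := Lp.coeFn_zero ℝ 2 μ
  refine ⟨hzero.symm.le, Z, hZ, ?_⟩
  filter_upwards [hzero, (hC hZ).2] with ω hω hZω
  simpa only [hω, Pi.zero_apply] using hZω

theorem unboundedInMeasureOn_of_indicatorConstLp_mem_closure (hA : MeasurableSet A)
    (hμA : μ A ≠ ∞) (h : ∀ k : ℝ, 0 ≤ k → indicatorConstLp 2 hA hμA k ∈ closure (solidL2 μ C)) :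
    UnboundedInMeasureOn μ C A := by
  intro K ε hε
  obtain ⟨f, hf, hf_lim⟩ := mem_closure_iff_seq_limit.1 (h (|K| + 1) (by positivity))
  obtain ⟨n, hn⟩ :=
    ((tendstoInMeasure_of_tendsto_Lp hf_lim 1 one_pos).eventually (gt_mem_nhds hε)).exists
  obtain ⟨-, Z, hZ, hfZ⟩ := hf n
  refine ⟨Z, hZ, (measure_mono_ae ?_).trans hn.le⟩
  filter_upwards [hfZ, indicatorConstLp_coeFn_mem (p := 2) (hs := hA) (hμs := hμA) (c := |K| + 1)]
    with ω hfω hcω hω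
  have hgap : 1 ≤ |K| + 1 - f n ω := by linarith [hω.2.out, le_abs_self K]
  change 1 ≤ edist (f n ω) _
  rw [hcω hω.1, edist_comm, edist_dist, ENNReal.one_le_ofReal, Real.dist_eq]
  exact hgap.trans (le_abs_self _)

theorem memLp_indicator_of_le {Z : Ω → ℝ} (hZ : Z ∈ L0pos μ) (hA : MeasurableSet A)
    (hμA : μ A ≠ ∞) {c : ℝ} (hZc : ∀ ω ∈ A, Z ω ≤ c) (p : ℝ≥0∞) : MemLp (A.indicator Z) p μ := by
  refine (memLp_indicator_const p hA c (Or.inr hμA)).mono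
    (hZ.1.indicator hA).aestronglyMeasurable ?_
  filter_upwards [hZ.2] with ω hω
  by_cases hωA : ω ∈ A
  · rw [Set.indicator_of_mem hωA, Set.indicator_of_mem hωA, Real.norm_of_nonneg hω]
    exact (hZc ω hωA).trans (le_abs_self c)
  · simp only [hωA, not_false_eq_true, Set.indicator_of_notMem, le_refl]

theorem toLp_indicator_mem_solidL2 {Z : Ω → ℝ} (hZC : Z ∈ C) (hZ : Z ∈ L0pos μ)
    (hmem : MemLp (A.indicator Z) 2 μ) : hmem.toLp ∈ solidL2 μ C := by
  refine ⟨?_, Z, hZC, ?_⟩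
  · filter_upwards [hmem.coeFn_toLp, hZ.2] with ω hω hZω
    rw [hω]
    exact Set.indicator_apply_nonneg fun _ ↦ hZω
  · filter_upwards [hmem.coeFn_toLp, hZ.2] with ω hω hZω
    rw [hω]
    exact Set.indicator_apply_le' (fun _ ↦ le_rfl) fun _ ↦ hZω

theorem lintegral_ofReal_mul_eq_ofReal_inner (g : Lp ℝ 2 μ) {f : Ω → ℝ} (hf : MemLp f 2 μ)
    (hfg : 0 ≤ᵐ[μ] fun ω ↦ f ω * g ω) :
    ∫⁻ ω, ENNReal.ofReal (f ω * g ω) ∂μ = ENNReal.ofReal ⟪g, hf.toLp⟫_ℝ := by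
  have hint : Integrable (fun ω ↦ f ω * g ω) μ := hf.integrable_mul (Lp.memLp g)
  rw [← ofReal_integral_eq_lintegral_ofReal hint hfg, L2.inner_def]
  congr 1
  refine integral_congr_ae ?_
  filter_upwards [hf.coeFn_toLp] with ω hω
  simp [hω]

theorem setLIntegral_ofReal_mul_le_one_of_inner_le_one {g : Lp ℝ 2 μ}
    (hg : ∀ f ∈ solidL2 μ C, ⟪g, f⟫_ℝ ≤ 1)
    {Z : Ω → ℝ} (hZC : Z ∈ C) (hZ : Z ∈ L0pos μ) (hA : MeasurableSet A) (hμA : μ A ≠ ∞) {c : ℝ}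
    (hZc : ∀ ω ∈ A, Z ω ≤ c) : ∫⁻ ω in A, ENNReal.ofReal (Z ω) * ENNReal.ofReal (g ω) ∂μ ≤ 1 := by
  -- By solidity `g` may be tested against `Z` restricted to `{0 < g}`, which isolates the positive
  -- part of `g`.
  set T := A ∩ {ω | 0 < g ω} with hT_def
  have hT : MeasurableSet T :=
    hA.inter (measurableSet_lt measurable_const (Lp.stronglyMeasurable g).measurable)
  have hmem : MemLp (T.indicator Z) 2 μ := memLp_indicator_of_le hZ hT
    (measure_ne_top_of_subset Set.inter_subset_left hμA) (fun ω hω ↦ hZc ω hω.1) 2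
  have hnonneg : 0 ≤ᵐ[μ] fun ω ↦ T.indicator Z ω * g ω := by
    filter_upwards [hZ.2] with ω hω
    by_cases hωT : ω ∈ T
    · simpa only [hωT, Set.indicator_of_mem, Pi.zero_apply] using mul_nonneg hω hωT.2.out.le
    · simp only [hωT, not_false_eq_true, Set.indicator_of_notMem, zero_mul, Pi.zero_apply, le_refl]
  have hpointwise : ∀ ω, A.indicator (fun ω ↦ ENNReal.ofReal (Z ω) * ENNReal.ofReal (g ω)) ω =
      ENNReal.ofReal (T.indicator Z ω * g ω) := by
    intro ω
    by_cases hωA : ω ∈ A <;> by_cases hgω : 0 < g ω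
    · simp [hT_def, hωA, hgω, ENNReal.ofReal_mul' hgω.le]
    · simp [hT_def, hωA, hgω, ENNReal.ofReal_of_nonpos (not_lt.1 hgω)]
    all_goals simp [hT_def, hωA]
  calc ∫⁻ ω in A, ENNReal.ofReal (Z ω) * ENNReal.ofReal (g ω) ∂μ
      = ∫⁻ ω, ENNReal.ofReal (T.indicator Z ω * g ω) ∂μ := by
        rw [← lintegral_indicator hA, lintegral_congr hpointwise]
    _ = ENNReal.ofReal ⟪g, hmem.toLp⟫_ℝ := lintegral_ofReal_mul_eq_ofReal_inner g hmem hnonneg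
    _ ≤ 1 := ENNReal.ofReal_le_one.2 (hg _ (toLp_indicator_mem_solidL2 hZC hZ hmem))

theorem lintegral_ofReal_mul_le_one_of_inner_le_one [SigmaFinite μ] {g : Lp ℝ 2 μ}
    (hg : ∀ f ∈ solidL2 μ C, ⟪g, f⟫_ℝ ≤ 1) {Z : Ω → ℝ} (hZC : Z ∈ C) (hZ : Z ∈ L0pos μ) :
    ∫⁻ ω, ENNReal.ofReal (Z ω) * ENNReal.ofReal (g ω) ∂μ ≤ 1 := by
  set S : ℕ → Set Ω := fun m ↦ spanningSets μ m ∩ {ω | Z ω ≤ m}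
  have hS_mono : Monotone S := fun m n hmn ↦ Set.inter_subset_inter (spanningSets_mono hmn)
    fun ω (hω : Z ω ≤ m) ↦ hω.trans (Nat.cast_le.2 hmn)
  have hS_univ : ⋃ m, S m = Set.univ := by
    refine Set.eq_univ_of_forall fun ω ↦ Set.mem_iUnion.2 ?_
    obtain ⟨k, hk⟩ := exists_nat_ge (Z ω)
    obtain ⟨l, hl⟩ := Set.mem_iUnion.1 ((iUnion_spanningSets μ).ge (Set.mem_univ ω))
    exact ⟨max k l, spanningSets_mono (le_max_right k l) hl,
      hk.trans (Nat.cast_le.2 (le_max_left k l))⟩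
  rw [← setLIntegral_univ, ← hS_univ, setLIntegral_iUnion_of_directed _ hS_mono.directed_le]
  exact iSup_le fun m ↦ setLIntegral_ofReal_mul_le_one_of_inner_le_one hg hZC hZ
    ((measurableSet_spanningSets μ m).inter (measurableSet_le hZ.1 measurable_const))
    (measure_ne_top_of_subset Set.inter_subset_left (measure_spanningSets_lt_top μ m).ne)
    fun ω hω ↦ hω.2

end SolidL2

section BoundingWeight

variable {Ω : Type*} [MeasurableSpace Ω] {μ : Measure Ω} {C : Set (Ω → ℝ)} {A : Set Ω}

/-- A weight with values in `[0, 1]` against which the positive part of every member of `C` has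
integral at most `1`. Positivity of the weight is not included. -/
structure IsBoundingWeight (μ : Measure Ω) (C : Set (Ω → ℝ)) (g : Ω → ℝ≥0∞) : Prop where
  measurable : Measurable g
  le_one : ∀ ω, g ω ≤ 1
  lintegral_le_one : ∀ Z ∈ C, ∫⁻ ω, ENNReal.ofReal (Z ω) * g ω ∂μ ≤ 1

theorem IsBoundingWeight.tsum {ι : Type*} [Countable ι] (hC : ∀ Z ∈ C, Measurable Z)
    {g : ι → Ω → ℝ≥0∞} (hg : ∀ i, IsBoundingWeight μ C (g i)) {w : ι → ℝ≥0∞} (hw : ∑' i, w i ≤ 1) :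
    IsBoundingWeight μ C fun ω ↦ ∑' i, w i * g i ω where
  measurable := .tsum fun i ↦ (hg i).measurable.const_mul _
  le_one ω := (ENNReal.tsum_le_tsum fun i ↦ mul_le_of_le_one_right' ((hg i).le_one ω)).trans hw
  lintegral_le_one Z hZ := by
    have hmeas : ∀ i, Measurable fun ω ↦ ENNReal.ofReal (Z ω) * g i ω := fun i ↦
      (hC Z hZ).ennreal_ofReal.mul (hg i).measurable
    calc ∫⁻ ω, ENNReal.ofReal (Z ω) * ∑' i, w i * g i ω ∂μ
        = ∑' i, w i * ∫⁻ ω, ENNReal.ofReal (Z ω) * g i ω ∂μ := by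
          simp_rw [← ENNReal.tsum_mul_left, mul_left_comm]
          rw [lintegral_tsum fun i ↦ ((hmeas i).const_mul _).aemeasurable]
          simp_rw [lintegral_const_mul _ (hmeas _)]
      _ ≤ ∑' i, w i :=
          ENNReal.tsum_le_tsum fun i ↦ mul_le_of_le_one_right' ((hg i).lintegral_le_one Z hZ)
      _ ≤ 1 := hw

theorem exists_isBoundingWeight_support_eq_iUnion (hC : ∀ Z ∈ C, Measurable Z)
    {ι : Type*} [Countable ι] {g : ι → Ω → ℝ≥0∞} (hg : ∀ i, IsBoundingWeight μ C (g i)) :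
    ∃ f, IsBoundingWeight μ C f ∧ f.support = ⋃ i, (g i).support := by
  obtain ⟨w, hw, hw_sum⟩ := ENNReal.exists_pos_sum_of_countable' one_ne_zero ι
  refine ⟨_, .tsum hC hg hw_sum.le, ?_⟩
  ext ω
  simp [(hw _).ne']

theorem exists_isBoundingWeight_measure_inter_support_ne_zero [SigmaFinite μ] (hC : Convex ℝ C)
    (hC0 : C ⊆ L0pos μ) (hne : C.Nonempty) (hA : MeasurableSet A) (hμA : μ A ≠ ∞)
    (hunb : ¬ UnboundedInMeasureOn μ C A) :
    ∃ g, IsBoundingWeight μ C g ∧ μ (A ∩ g.support) ≠ 0 := by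
  obtain ⟨k, hk0, hk⟩ : ∃ k : ℝ, 0 ≤ k ∧ indicatorConstLp 2 hA hμA k ∉ closure (solidL2 μ C) := by
    by_contra! h
    exact hunb (unboundedInMeasureOn_of_indicatorConstLp_mem_closure hA hμA h)
  obtain ⟨g, hgD, hgk⟩ := exists_inner_le_one_lt_inner_of_notMem_closure (convex_solidL2 hC)
    (zero_mem_solidL2 hC0 hne) hk
  have hg_meas : Measurable g := (Lp.stronglyMeasurable g).measurable
  refine ⟨fun ω ↦ min 1 (ENNReal.ofReal (g ω)),
    ⟨by fun_prop, fun ω ↦ min_le_left _ _, fun Z hZ ↦ ?_⟩, fun hnull ↦ hgk.not_ge ?_⟩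
  · exact (lintegral_mono fun ω ↦ mul_le_mul_right (min_le_right _ _) _).trans
      (lintegral_ofReal_mul_le_one_of_inner_le_one hgD hZ (hC0 hZ))
  · rw [real_inner_comm, L2.inner_indicatorConstLp_eq_setIntegral_inner]
    refine (setIntegral_nonpos_ae hA ?_).trans zero_le_one
    filter_upwards [measure_eq_zero_iff_ae_notMem.1 hnull] with ω hω hωA
    have hgω : g ω ≤ 0 := by simpa [hωA] using hω
    exact mul_nonpos_of_nonpos_of_nonneg hgω hk0

theorem exists_isBoundingWeight_ae_pos [SigmaFinite μ] (hC : Convex ℝ C) (hC0 : C ⊆ L0pos μ)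
    (hunb : ∀ A, MeasurableSet A → μ A ≠ 0 → ¬ UnboundedInMeasureOn μ C A) :
    ∃ g, IsBoundingWeight μ C g ∧ ∀ᵐ ω ∂μ, 0 < g ω := by
  obtain rfl | hne := C.eq_empty_or_nonempty
  · exact ⟨1, ⟨measurable_one, fun _ ↦ le_rfl, by simp⟩, by simp⟩
  let 𝒜 : Set (Set Ω) := Function.support '' {g | IsBoundingWeight μ C g}
  have hmeas : ∀ s ∈ 𝒜, MeasurableSet s := by
    rintro _ ⟨g, hg, rfl⟩
    exact measurableSet_support hg.measurable
  have hUnion : ∀ 𝒮 ⊆ 𝒜, 𝒮.Countable → ⋃₀ 𝒮 ∈ 𝒜 := by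
    intro 𝒮 h𝒮 h𝒮_count
    have := h𝒮_count.to_subtype
    choose g hg hg_supp using fun s : 𝒮 ↦ h𝒮 s.2
    obtain ⟨f, hf, hf_supp⟩ :=
      exists_isBoundingWeight_support_eq_iUnion (fun Z hZ ↦ (hC0 hZ).1) hg
    exact ⟨f, hf, by simp only [hf_supp, hg_supp, Set.sUnion_eq_iUnion]⟩
  have hmeet : ∀ A, MeasurableSet A → μ A ≠ 0 → ∃ s ∈ 𝒜, μ (A ∩ s) ≠ 0 := by
    intro A hA hμA
    obtain ⟨B, hB, hBA, hμB, hμB_top⟩ :=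
      Measure.exists_subset_measure_lt_top hA (pos_iff_ne_zero.2 hμA)
    obtain ⟨g, hg, hBg⟩ := exists_isBoundingWeight_measure_inter_support_ne_zero hC hC0 hne hB
      hμB_top.ne (hunb B hB hμB.ne')
    exact ⟨_, ⟨g, hg, rfl⟩, fun h ↦ hBg (measure_mono_null (Set.inter_subset_inter_left _ hBA) h)⟩
  obtain ⟨_, ⟨g, hg, rfl⟩, hg_supp⟩ :=
    exists_mem_measure_compl_eq_zero_of_sUnion_mem hmeas hUnion hmeet
  refine ⟨g, hg, ?_⟩
  filter_upwards [measure_eq_zero_iff_ae_notMem.1 hg_supp] with ω hω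
  exact pos_iff_ne_zero.2 (not_not.1 hω)

end BoundingWeight

section Oset

variable {Ω : Type*} [MeasurableSpace Ω] {P : Measure Ω} {𝒳 : Set (Ω → ℝ)}

theorem convex_L0pos : Convex ℝ (L0pos P) := by
  rintro X ⟨hX, hX0⟩ Y ⟨hY, hY0⟩ a b ha hb -
  refine ⟨(hX.const_smul a).add (hY.const_smul b), ?_⟩
  filter_upwards [hX0, hY0] with ω hXω hYω
  simp only [Pi.add_apply, Pi.smul_apply, smul_eq_mul]
  positivity

theorem scSet_subset_scSet {S T : Set (Ω → ℝ)} (h : ∀ X ∈ S, ∃ Z ∈ convexHull ℝ T, X ≤ᵐ[P] Z) :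
    scSet P S ⊆ scSet P T := by
  have hconv : Convex ℝ {X | ∃ Z ∈ convexHull ℝ T, X ≤ᵐ[P] Z} := by
    rintro X₁ ⟨Z₁, hZ₁, hle₁⟩ X₂ ⟨Z₂, hZ₂, hle₂⟩ a b ha hb hab
    refine ⟨a • Z₁ + b • Z₂, convex_convexHull ℝ T hZ₁ hZ₂ ha hb hab, ?_⟩
    filter_upwards [hle₁, hle₂] with ω h₁ h₂
    simp only [Pi.add_apply, Pi.smul_apply, smul_eq_mul]
    gcongr
  rintro Y ⟨hY, X, hX, hYX⟩
  obtain ⟨Z, hZ, hXZ⟩ := convexHull_min h hconv hX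
  exact ⟨hY, Z, hZ, EventuallyLE.trans hYX hXZ⟩

theorem Oset_eq_scSet_image_excess (n : ℕ) : Oset P 𝒳 n = scSet P (excess n '' 𝒳) :=
  congrArg (scSet P) (Set.ext fun _ ↦ exists_congr fun _ ↦ and_congr_right' eq_comm)

theorem Oset_subset_scSet (h𝒳 : 𝒳 ⊆ L0pos P) (n : ℕ) : Oset P 𝒳 n ⊆ scSet P 𝒳 := by
  rw [Oset_eq_scSet_image_excess]
  refine scSet_subset_scSet ?_
  rintro _ ⟨X, hX, rfl⟩
  refine ⟨X, subset_convexHull ℝ 𝒳 hX, ?_⟩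
  filter_upwards [(h𝒳 hX).2] with ω hω
  exact max_le (sub_le_self _ n.cast_nonneg) hω

theorem mem_Oset_of_le_excess {n : ℕ} {Y Z : Ω → ℝ} (hY : Y ∈ L0pos P)
    (hZ : Z ∈ convexHull ℝ 𝒳) (hYZ : Y ≤ᵐ[P] excess n Z) : Y ∈ Oset P 𝒳 n := by
  rw [Oset_eq_scSet_image_excess]
  obtain ⟨W, hW, hZW⟩ :=
    exists_mem_convexHull_image_ge (convexOn_excess (n : ℝ)) (Set.subset_univ 𝒳) hZ
  exact ⟨hY, W, hW, hYZ.mono fun ω hω ↦ hω.trans (hZW ω)⟩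

theorem not_unboundedInMeasureOn_convexHull (h𝒳 : 𝒳 ⊆ L0pos P)
    (hcap : ∀ Y : Ω → ℝ, (∀ n : ℕ, Y ∈ Oset P 𝒳 n) → ∀ᵐ ω ∂P, Y ω = 0)
    {A : Set Ω} (hA : MeasurableSet A) (hPA : P A ≠ 0) :
    ¬ UnboundedInMeasureOn P (convexHull ℝ 𝒳) A := by
  intro hunb
  have hmeas : ∀ Z ∈ convexHull ℝ 𝒳, Measurable Z := fun Z hZ ↦
    (convexHull_min h𝒳 convex_L0pos hZ).1
  obtain ⟨B, -, hB, hPB, hZB⟩ := hunb.exists_subset_forall_le hmeas hA hPA fun n ↦ n + 1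
  have hB_mem : ∀ n : ℕ, B.indicator 1 ∈ Oset P 𝒳 n := by
    intro n
    obtain ⟨Z, hZ, hle⟩ := hZB n
    refine mem_Oset_of_le_excess ⟨measurable_one.indicator hB, ae_of_all _
      (Set.indicator_nonneg fun _ _ ↦ zero_le_one)⟩ hZ (ae_of_all _ fun ω ↦ ?_)
    exact Set.indicator_apply_le' (fun hω ↦ le_max_of_le_left (le_sub_iff_add_le'.2 (hle ω hω)))
      fun _ ↦ le_max_right _ _
  refine hPB (measure_eq_zero_iff_ae_notMem.2 ?_)
  filter_upwards [hcap _ hB_mem] with ω hω hωB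
  simp [hωB] at hω

theorem IsBoundingWeight.lintegral_toReal_le_one_of_mem_scSet {C : Set (Ω → ℝ)} {g : Ω → ℝ≥0∞}
    (hg : IsBoundingWeight P (convexHull ℝ C) g) {Y : Ω → ℝ} (hY : Y ∈ scSet P C) :
    ∫⁻ ω, ENNReal.ofReal (Y ω * (g ω).toReal) ∂P ≤ 1 := by
  obtain ⟨-, Z, hZ, hYZ⟩ := hY
  refine (lintegral_mono_ae ?_).trans (hg.lintegral_le_one Z hZ)
  filter_upwards [hYZ] with ω hω
  rw [ENNReal.ofReal_mul' ENNReal.toReal_nonneg,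
    ENNReal.ofReal_toReal (ne_top_of_le_ne_top ENNReal.one_ne_top (hg.le_one ω))]
  gcongr

end Oset

theorem stmt_14_general {Ω : Type*} [MeasurableSpace Ω] (P : Measure Ω) [SigmaFinite P]
    (𝒳 : Set (Ω → ℝ)) (h𝒳 : 𝒳 ⊆ L0pos P)
    (hcap : ∀ Y : Ω → ℝ, (∀ n : ℕ, Y ∈ Oset P 𝒳 n) → ∀ᵐ ω ∂P, Y ω = 0) :
    ∃ g : Ω → ℝ, Measurable g ∧ (∀ᵐ ω ∂P, 0 < g ω ∧ g ω ≤ 1) ∧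
      ∀ n : ℕ, (⨆ Y ∈ Oset P 𝒳 n, ∫⁻ ω, ENNReal.ofReal (Y ω * g ω) ∂P) ≤ 1 := by
  obtain ⟨g, hg, hg_pos⟩ := exists_isBoundingWeight_ae_pos (convex_convexHull ℝ 𝒳)
    (convexHull_min h𝒳 convex_L0pos)
    fun A hA hPA ↦ not_unboundedInMeasureOn_convexHull h𝒳 hcap hA hPA
  refine ⟨fun ω ↦ (g ω).toReal, hg.measurable.ennreal_toReal, ?_, fun n ↦ iSup₂_le fun Y hY ↦
    hg.lintegral_toReal_le_one_of_mem_scSet (Oset_subset_scSet h𝒳 n hY)⟩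
  filter_upwards [hg_pos] with ω hω
  exact ⟨ENNReal.toReal_pos hω.ne' (ne_top_of_le_ne_top ENNReal.one_ne_top (hg.le_one ω)),
    ENNReal.toReal_le_of_le_ofReal zero_le_one (by simpa using hg.le_one ω)⟩

/-- If `⋂ₙ Oₙ^𝒳 = {0}`, there is a measurable `g` with `0 < g ≤ 1` a.s. such that
`sup_{Y ∈ Oₙ^𝒳} E_P[Y g] ≤ 1` for all `n`. -/
theorem stmt_14 {Ω : Type*} [MeasurableSpace Ω] (P : Measure Ω) [IsProbabilityMeasure P]
    (𝒳 : Set (Ω → ℝ)) (h𝒳 : 𝒳 ⊆ L0pos P)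
    (hcap : ∀ Y : Ω → ℝ, (∀ n : ℕ, Y ∈ Oset P 𝒳 n) → ∀ᵐ ω ∂P, Y ω = 0) :
    ∃ g : Ω → ℝ, Measurable g ∧ (∀ᵐ ω ∂P, 0 < g ω ∧ g ω ≤ 1) ∧
      ∀ n : ℕ, (⨆ Y ∈ Oset P 𝒳 n, ∫⁻ ω, ENNReal.ofReal (Y ω * g ω) ∂P) ≤ 1 :=
  stmt_14_general P 𝒳 h𝒳 hcap
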